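/- arXiv:2105.02053 — 3 statements merged into one kernel-verified Lean document; each statement's English description precedes it below -/
import Mathlib

section
/- For every μ ∈ ℂ ∖ [0,∞) with Re μ ≤ 0, one has Re Φ_∞(μ) < 0. -/
open MeasureTheory Filter

/-- The function `Φ_∞(μ) = μ ∫₀^∞ (μ - V_s(y))⁻² dy`. -/
noncomputable def PhiInf (Vs : ℝ → ℝ) (μ : ℂ) : ℂ :=
  μ * ∫ y in Set.Ioi (0 : ℝ), ((μ - (Vs y : ℂ)) ^ 2)⁻¹

/-!
For `Re μ ≤ 0` the integrand already has the right sign pointwise: multiplying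
`μ / (μ - t) ^ 2` by the conjugate of its denominator gives
`Re (μ / (μ - t) ^ 2) = (Re μ * (|μ| ^ 2 + t ^ 2) - 2 * |μ| ^ 2 * t) / |μ - t| ^ 4`,
which is nonpositive for `t ≥ 0` and, if `μ ≠ 0`, negative for `t > 0`.
-/

open Set Asymptotics

theorem re_mul_inv_sub_ofReal_sq (μ : ℂ) (t : ℝ) :
    (μ * ((μ - t) ^ 2)⁻¹).re =
      (μ.re * (Complex.normSq μ + t ^ 2) - 2 * Complex.normSq μ * t) /
        Complex.normSq (μ - t) ^ 2 := by
  simp only [Complex.mul_re, Complex.inv_re, Complex.inv_im, map_pow, Complex.normSq_apply μ]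
  simp only [pow_two, Complex.mul_re, Complex.mul_im, Complex.sub_re, Complex.sub_im,
    Complex.ofReal_re, Complex.ofReal_im]
  ring

section Integrand

variable {μ : ℂ} {t : ℝ}

theorem sub_ofReal_ne_zero_of_re_nonpos (hμ : μ ≠ 0) (hre : μ.re ≤ 0) (ht : 0 ≤ t) :
    μ - t ≠ 0 := by
  intro h
  obtain rfl := sub_eq_zero.mp h
  exact hμ (by rw [le_antisymm (by simpa using hre) ht, Complex.ofReal_zero])

theorem re_mul_inv_sub_ofReal_sq_nonpos (hre : μ.re ≤ 0) (ht : 0 ≤ t) :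
    (μ * ((μ - t) ^ 2)⁻¹).re ≤ 0 := by
  rw [re_mul_inv_sub_ofReal_sq]
  have hN : 0 ≤ Complex.normSq μ := Complex.normSq_nonneg μ
  have hre' : μ.re * (Complex.normSq μ + t ^ 2) ≤ 0 :=
    mul_nonpos_of_nonpos_of_nonneg hre (by positivity)
  have hNt : 0 ≤ 2 * Complex.normSq μ * t := by positivity
  exact div_nonpos_of_nonpos_of_nonneg (by linarith) (by positivity)

theorem re_mul_inv_sub_ofReal_sq_neg (hμ : μ ≠ 0) (hre : μ.re ≤ 0) (ht : 0 < t) :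
    (μ * ((μ - t) ^ 2)⁻¹).re < 0 := by
  rw [re_mul_inv_sub_ofReal_sq]
  have hN : 0 < Complex.normSq μ := Complex.normSq_pos.mpr hμ
  have hre' : μ.re * (Complex.normSq μ + t ^ 2) ≤ 0 :=
    mul_nonpos_of_nonpos_of_nonneg hre (by positivity)
  have hNt : 0 < 2 * Complex.normSq μ * t := by positivity
  have hden : 0 < Complex.normSq (μ - t) :=
    Complex.normSq_pos.mpr (sub_ofReal_ne_zero_of_re_nonpos hμ hre ht.le)
  exact div_neg_of_neg_of_pos (by linarith) (by positivity)

end Integrand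

theorem re_mul_integral_inv_sub_sq_neg {α : Type*} [MeasurableSpace α] {ν : Measure α}
    {V : α → ℝ} {μ : ℂ} (hμ : μ ≠ 0) (hre : μ.re ≤ 0) (hV : 0 ≤ᵐ[ν] V) (hV_ne : ¬V =ᵐ[ν] 0)
    (hint : Integrable (fun x ↦ ((μ - V x) ^ 2)⁻¹) ν) :
    (μ * ∫ x, ((μ - V x) ^ 2)⁻¹ ∂ν).re < 0 := by
  have hre_int : (μ * ∫ x, ((μ - V x) ^ 2)⁻¹ ∂ν).re = ∫ x, (μ * ((μ - V x) ^ 2)⁻¹).re ∂ν := by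
    rw [← integral_const_mul]
    exact (integral_re (hint.const_mul μ)).symm
  have hnonpos : (fun x ↦ (μ * ((μ - V x) ^ 2)⁻¹).re) ≤ᵐ[ν] 0 := by
    filter_upwards [hV] with x hx using re_mul_inv_sub_ofReal_sq_nonpos hre hx
  rw [hre_int]
  refine (integral_nonpos_of_ae hnonpos).lt_of_ne fun h_int_zero ↦ hV_ne ?_
  have h_ae_zero : (fun x ↦ (μ * ((μ - V x) ^ 2)⁻¹).re) =ᵐ[ν] 0 :=
    (integral_eq_iff_of_ae_le (hint.const_mul μ).re (integrable_zero _ _ _) hnonpos).mp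
      (by simpa using h_int_zero)
  filter_upwards [hV, h_ae_zero] with x hx hx_zero
  by_contra hx_ne
  exact (re_mul_inv_sub_ofReal_sq_neg hμ hre (hx.lt_of_ne' hx_ne)).ne hx_zero

theorem isBigO_add_of_isBigO_one {α E F : Type*} [SeminormedAddCommGroup E]
    [SeminormedAddCommGroup F] {l : Filter α} {f : α → E} {g h : α → F}
    (hf : Tendsto (fun x ↦ ‖f x‖) l atTop) (hfg : f =O[l] g) (hh : h =O[l] fun _ ↦ (1 : ℝ)) :
    f =O[l] fun x ↦ h x + g x := by
  have hone : (fun _ ↦ (1 : ℝ)) =o[l] f := (isLittleO_one_left_iff ℝ).mpr hf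
  exact hfg.trans ((hh.trans_isLittleO hone).trans_isBigO hfg).right_isBigO_add

theorem isBigO_id_of_tendsto_sub_id {V : ℝ → ℝ} {A : ℝ}
    (hV : Tendsto (fun y ↦ V y - y) atTop (nhds A)) : (fun y ↦ y) =O[atTop] V := by
  simpa only [sub_add_cancel] using
    isBigO_add_of_isBigO_one tendsto_norm_atTop_atTop (isBigO_refl _ _) (hV.isBigO_one ℝ)

theorem nonneg_of_deriv_pos {f : ℝ → ℝ} {a : ℝ} (hf : ContinuousOn f (Ici a)) (ha : 0 ≤ f a)
    (hf' : ∀ y ∈ Ioi a, 0 < deriv f y) : ∀ y ∈ Ici a, 0 ≤ f y := by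
  have hmono : StrictMonoOn f (Ici a) :=
    strictMonoOn_of_deriv_pos (convex_Ici a) hf (by rwa [interior_Ici])
  exact fun y hy ↦ ha.trans (hmono.monotoneOn self_mem_Ici hy hy)

theorem not_ae_eq_zero_restrict_Ioi_of_eventually_ne_zero {E : Type*} [Zero E] {f : ℝ → E}
    (hf : ∀ᶠ y in atTop, f y ≠ 0) (a : ℝ) : ¬f =ᵐ[volume.restrict (Ioi a)] 0 := by
  intro h_zero
  obtain ⟨b, hb⟩ := eventually_atTop.mp hf
  have : NeBot (ae (volume.restrict (Ioi (max a b)))) := ae_restrict_neBot.mpr (by simp)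
  obtain ⟨y, hy, hy_zero⟩ := ((ae_restrict_mem measurableSet_Ioi).and
    (ae_restrict_of_ae_restrict_of_subset (Ioi_subset_Ioi (le_max_left a b)) h_zero)).exists
  exact hb y ((le_max_right a b).trans hy.le) hy_zero

section Growth

variable {V : ℝ → ℝ} {r : ℝ}

theorem eventually_ne_zero_of_isBigO_rpow (hV : (fun y ↦ y ^ r) =O[atTop] V) :
    ∀ᶠ y in atTop, V y ≠ 0 := by
  filter_upwards [hV.eq_zero_imp, eventually_gt_atTop 0] with y hy hy_pos h
  exact (Real.rpow_pos_of_pos hy_pos r).ne' (hy h)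

theorem isBigO_inv_sub_sq_of_isBigO_rpow (hr : 0 < r) (hV : (fun y ↦ y ^ r) =O[atTop] V) (μ : ℂ) :
    (fun y ↦ ((μ - V y) ^ 2)⁻¹) =O[atTop] fun y ↦ y ^ (-(2 * r)) := by
  have hsub : (fun y ↦ y ^ r) =O[atTop] fun y ↦ μ - V y := by
    simpa only [sub_eq_add_neg] using
      isBigO_add_of_isBigO_one (tendsto_norm_atTop_atTop.comp (tendsto_rpow_atTop hr))
        (Complex.isBigO_ofReal_right.mpr hV).neg_right (isBigO_const_const μ one_ne_zero atTop)
  have hsq_ne : ∀ᶠ y : ℝ in atTop, (y ^ r) ^ 2 ≠ 0 := by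
    filter_upwards [eventually_gt_atTop 0] with y hy using by positivity
  refine ((hsub.pow 2).inv_rev (hsq_ne.mono fun y hy h ↦ absurd h hy)).congr' .rfl ?_
  filter_upwards [eventually_ge_atTop 0] with y hy
  rw [Real.rpow_neg hy, mul_comm, Real.rpow_mul hy, Real.rpow_two]

theorem integrableOn_Ioi_inv_sub_sq {a : ℝ} {μ : ℂ} (hV_cont : ContinuousOn V (Ici a))
    (hμ : ∀ y ∈ Ici a, μ - V y ≠ 0) (hr : 1 / 2 < r) (hV : (fun y ↦ y ^ r) =O[atTop] V) :
    IntegrableOn (fun y ↦ ((μ - V y) ^ 2)⁻¹) (Ioi a) := by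
  have hcont : ContinuousOn (fun y ↦ ((μ - V y) ^ 2)⁻¹) (Ici a) :=
    ContinuousOn.inv₀ (by fun_prop) fun y hy ↦ pow_ne_zero 2 (hμ y hy)
  have hrpow : IntegrableOn (fun y : ℝ ↦ y ^ (-(2 * r))) (Ioi 1) :=
    integrableOn_Ioi_rpow_of_lt (by linarith) one_pos
  exact ((hcont.locallyIntegrableOn measurableSet_Ici).integrableOn_of_isBigO_atTop
    (isBigO_inv_sub_sq_of_isBigO_rpow (by linarith) hV μ)
    ⟨Ioi 1, Ioi_mem_atTop 1, hrpow⟩).mono_set Ioi_subset_Ici_self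

theorem PhiInf_re_neg_general {μ : ℂ} (hμ : μ ≠ 0) (hre : μ.re ≤ 0)
    (hV_cont : ContinuousOn V (Ici 0)) (hV_nonneg : ∀ y ∈ Ici 0, 0 ≤ V y)
    (hr : 1 / 2 < r) (hV : (fun y ↦ y ^ r) =O[atTop] V) :
    (PhiInf V μ).re < 0 := by
  have hint : IntegrableOn (fun y ↦ ((μ - V y) ^ 2)⁻¹) (Ioi 0) :=
    integrableOn_Ioi_inv_sub_sq hV_cont
      (fun y hy ↦ sub_ofReal_ne_zero_of_re_nonpos hμ hre (hV_nonneg y hy)) hr hV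
  have hV_ne : ¬V =ᵐ[volume.restrict (Ioi 0)] 0 :=
    not_ae_eq_zero_restrict_Ioi_of_eventually_ne_zero (eventually_ne_zero_of_isBigO_rpow hV) 0
  exact re_mul_integral_inv_sub_sq_neg hμ hre
    (ae_restrict_of_forall_mem measurableSet_Ioi fun y hy ↦ hV_nonneg y (Ioi_subset_Ici_self hy))
    hV_ne hint

end Growth

/-- `Re Φ_∞(μ) < 0` for `μ ∈ ℂ ∖ [0,∞)` with `Re μ ≤ 0`. -/
theorem PhiInf_re_neg
    (Vs : ℝ → ℝ) (As : ℝ)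
    (hVs_smooth : ContDiff ℝ (⊤ : ℕ∞) Vs)
    (hVs0 : Vs 0 = 0)
    (hVs'pos : ∀ z : ℝ, 0 ≤ z → 0 < deriv Vs z)
    (hdecay : ∀ p : ℕ, Tendsto (fun z : ℝ => z ^ p * (Vs z - z - As)) atTop (nhds 0))
    (hderiv_decay : ∀ n : ℕ, 1 ≤ n → ∀ p : ℕ,
      Tendsto (fun z : ℝ => z ^ p * iteratedDeriv n (fun w => Vs w - w) z) atTop (nhds 0))
    :
    ∀ μ : ℂ, (μ.im ≠ 0 ∨ μ.re < 0) → μ.re ≤ 0 → (PhiInf Vs μ).re < 0 := by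
  intro μ hμ hre
  have hcont : ContinuousOn Vs (Ici 0) := hVs_smooth.continuous.continuousOn
  have hgrowth : (fun z ↦ z) =O[atTop] Vs :=
    isBigO_id_of_tendsto_sub_id (by simpa using (hdecay 0).add_const As)
  exact PhiInf_re_neg_general (r := 1) (by rintro rfl; simp at hμ) hre hcont
    (nonneg_of_deriv_pos hcont hVs0.ge fun z hz ↦ hVs'pos z hz.le) one_half_lt_one
    (by simpa only [Real.rpow_one] using hgrowth)
end

section
/- For every μ ∈ ℂ ∖ [0,∞), Φ_∞(μ) = −1/V_s'(0) + μ ∫₀^∞ g(u)/(μ − u) du, where the integral on the right converges absolutely. -/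
open MeasureTheory Filter

/-!
Since `((μ - V)⁻¹)' = V' (μ - V)⁻²`, integrating `(μ - V)⁻² = V'⁻¹ ((μ - V)⁻¹)'` by parts gives
`∫₀^∞ (μ - V)⁻² = -(V'(0) μ)⁻¹ + ∫₀^∞ V'' / (V'² (μ - V))`, and the substitution `u = V z` turns
the last integral into `∫₀^∞ g(u) / (μ - u) du`. As `V` grows at least linearly and `V'` is bounded
below, both integrals converge and the boundary term at infinity vanishes as soon as `V'' z / z` is
integrable at infinity.
-/

section

open Set Asymptotics Topology

section LinearGrowth

theorem eventually_mul_le_of_eventually_le_deriv {f f' : ℝ → ℝ} {a c d : ℝ}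
    (hf : ∀ z ∈ Ici a, HasDerivWithinAt f (f' z) (Ici a) z)
    (hf' : ∀ᶠ z in atTop, c ≤ f' z) (hdc : d < c) : ∀ᶠ z in atTop, d * z ≤ f z := by
  obtain ⟨b, hab, hb⟩ : ∃ b, a ≤ b ∧ ∀ z ≥ b, c ≤ f' z := by
    obtain ⟨b, hb⟩ := eventually_atTop.1 hf'
    exact ⟨max a b, le_max_left a b, fun z hz => hb z (le_of_max_le_right hz)⟩
  have hderiv : ∀ z ∈ interior (Ici b), HasDerivAt f (f' z) z := fun z hz => by
    have haz : a < z := hab.trans_lt (by simpa using hz)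
    exact (hf z haz.le).hasDerivAt (Ici_mem_nhds haz)
  have hcont : ContinuousOn f (Ici b) := fun z hz =>
    ((hf z (hab.trans hz)).continuousWithinAt).mono (Ici_subset_Ici.2 hab)
  have hmvt : ∀ z ≥ b, c * (z - b) ≤ f z - f b := fun z hz =>
    (convex_Ici b).mul_sub_le_image_sub_of_le_deriv hcont
      (fun y hy => (hderiv y hy).differentiableAt.differentiableWithinAt)
      (fun y hy => (hderiv y hy).deriv ▸ hb y (interior_subset hy)) b self_mem_Ici z hz hz
  have hgap : Tendsto (fun z => (c - d) * z) atTop atTop :=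
    tendsto_id.const_mul_atTop (sub_pos.2 hdc)
  filter_upwards [eventually_ge_atTop b, hgap.eventually_ge_atTop (c * b - f b)] with z hz hgapz
  linarith [hmvt z hz]

variable {f : ℝ → ℝ} {c : ℝ}

theorem tendsto_atTop_of_eventually_mul_le (hc : 0 < c) (h : ∀ᶠ z in atTop, c * z ≤ f z) :
    Tendsto f atTop atTop :=
  tendsto_atTop_mono' atTop h (tendsto_id.const_mul_atTop hc)

theorem id_isBigO_of_eventually_mul_le (hc : 0 < c) (h : ∀ᶠ z in atTop, c * z ≤ f z) :
    id =O[atTop] f := by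
  refine IsBigO.of_bound c⁻¹ ?_
  filter_upwards [h, eventually_ge_atTop 0] with z hz hz0
  rw [id, Real.norm_of_nonneg hz0, inv_mul_eq_div, le_div_iff₀' hc]
  exact hz.trans (le_abs_self _)

end LinearGrowth

theorem inv_isBigO_one_of_eventually_le {α : Type*} {l : Filter α} {f : α → ℝ} {c : ℝ}
    (hc : 0 < c) (h : ∀ᶠ z in l, c ≤ f z) : (fun z => (f z)⁻¹) =O[l] fun _ => (1 : ℝ) := by
  refine IsBigO.of_bound c⁻¹ ?_
  filter_upwards [h] with z hz
  rw [norm_inv, norm_one, mul_one]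
  exact inv_anti₀ hc (hz.trans (le_abs_self _))

theorem isBigO_inv_const_sub {α 𝕜 : Type*} [NormedField 𝕜] {l : Filter α} {f : α → 𝕜}
    {g : α → ℝ} (hgf : g =O[l] f) (hg : Tendsto g l atTop) (μ : 𝕜) :
    (fun z => (μ - f z)⁻¹) =O[l] fun z => (g z)⁻¹ := by
  have hconst : (fun _ => μ) =o[l] f :=
    (isLittleO_const_left.2 (.inr (tendsto_norm_atTop_atTop.comp hg))).trans_isBigO hgf
  have hsub : g =O[l] fun z => μ - f z :=
    hgf.trans (hconst.right_isBigO_sub.trans (isBigO_of_le l fun z => (norm_sub_rev _ _).le))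
  refine hsub.inv_rev ?_
  filter_upwards [hg.eventually_gt_atTop 0] with z hz hz0
  exact absurd hz0 hz.ne'

theorem deriv_sub_id {f : ℝ → ℝ} (hf : Differentiable ℝ f) :
    deriv (fun w => f w - w) = fun z => deriv f z - 1 :=
  funext fun z => ((hf z).hasDerivAt.sub (hasDerivAt_id z)).deriv

theorem iteratedDeriv_two_sub_id {f : ℝ → ℝ} (hf : Differentiable ℝ f) :
    iteratedDeriv 2 (fun w => f w - w) = deriv (deriv f) := by
  rw [iteratedDeriv_succ', iteratedDeriv_one, deriv_sub_id hf, deriv_sub_const_fun]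

theorem integrableAtFilter_div_id_of_tendsto_id_mul {f : ℝ → ℝ} {x : ℝ} (hf : Continuous f)
    (h : Tendsto (fun z => z * f z) atTop (𝓝 x)) :
    IntegrableAtFilter (fun z => f z / z) atTop := by
  have hdecay : (fun z => f z / z) =O[atTop] fun z : ℝ => z ^ (-2 : ℝ) := by
    refine ((h.isBigO_one ℝ).mul (isBigO_refl (fun z : ℝ => z ^ (-2 : ℝ)) atTop)).congr' ?_
      (by simp)
    filter_upwards [eventually_gt_atTop 0] with z hz
    rw [Real.rpow_neg hz.le, Real.rpow_ofNat]
    field_simp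
  refine hdecay.integrableAtFilter ?_ (integrableAtFilter_rpow_atTop_iff.2 (by norm_num))
  exact (hf.measurable.div measurable_id).aestronglyMeasurable.stronglyMeasurableAtFilter

section ChangeOfVariables

variable {E : Type*} [NormedAddCommGroup E] [NormedSpace ℝ E] {f f' : ℝ → ℝ} {a : ℝ}

theorem integrableOn_Ioi_iff_integrableOn_deriv_smul_comp
    (hf : ∀ z ∈ Ici a, HasDerivWithinAt f (f' z) (Ici a) z) (hmono : StrictMonoOn f (Ici a))
    (htop : Tendsto f atTop atTop) (G : ℝ → E) :
    IntegrableOn G (Ioi (f a)) ↔ IntegrableOn (fun z => f' z • G (f z)) (Ioi a) := by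
  rw [← ContinuousOn.image_Ioi_of_strictMonoOn (HasDerivWithinAt.continuousOn hf) hmono htop]
  exact integrableOn_image_iff_integrableOn_deriv_smul_of_monotoneOn measurableSet_Ioi
    (fun z hz => (hf z (Ioi_subset_Ici_self hz)).mono Ioi_subset_Ici_self)
    (hmono.monotoneOn.mono Ioi_subset_Ici_self) G

theorem integral_Ioi_eq_integral_deriv_smul_comp
    (hf : ∀ z ∈ Ici a, HasDerivWithinAt f (f' z) (Ici a) z) (hmono : StrictMonoOn f (Ici a))
    (htop : Tendsto f atTop atTop) (G : ℝ → E) :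
    ∫ u in Ioi (f a), G u = ∫ z in Ioi a, f' z • G (f z) := by
  rw [← ContinuousOn.image_Ioi_of_strictMonoOn (HasDerivWithinAt.continuousOn hf) hmono htop]
  exact integral_image_eq_integral_deriv_smul_of_monotoneOn measurableSet_Ioi
    (fun z hz => (hf z (Ioi_subset_Ici_self hz)).mono Ioi_subset_Ici_self)
    (hmono.monotoneOn.mono Ioi_subset_Ici_self) G

end ChangeOfVariables

theorem strictMonoOn_of_forall_hasDerivWithinAt_pos {f f' : ℝ → ℝ} {s : Set ℝ} (hs : Convex ℝ s)
    (hf : ∀ z ∈ s, HasDerivWithinAt f (f' z) s z) (hpos : ∀ z ∈ s, 0 < f' z) :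
    StrictMonoOn f s :=
  strictMonoOn_of_hasDerivWithinAt_pos hs (HasDerivWithinAt.continuousOn hf)
    (fun z hz => (hf z (interior_subset hz)).mono interior_subset)
    (fun z hz => hpos z (interior_subset hz))

section Resolvent

variable {V V' V'' : ℝ → ℝ} {a : ℝ} {μ : ℂ}

theorem hasDerivWithinAt_inv_const_sub_mul_inv_deriv {s : Set ℝ} {z : ℝ}
    (hV : HasDerivWithinAt V (V' z) s z) (hV' : HasDerivWithinAt V' (V'' z) s z)
    (hμ : μ - V z ≠ 0) (hV'0 : V' z ≠ 0) :
    HasDerivWithinAt (fun z => (μ - V z)⁻¹ * (V' z : ℂ)⁻¹)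
      (((μ - V z) ^ 2)⁻¹ - V'' z / (V' z ^ 2 * (μ - V z))) s z := by
  have hV'0' : (V' z : ℂ) ≠ 0 := Complex.ofReal_ne_zero.2 hV'0
  have hres := (hV.ofReal_comp.const_sub μ).fun_inv hμ
  have hinv := hV'.ofReal_comp.fun_inv hV'0'
  refine (hres.mul hinv).congr_deriv ?_
  field_simp
  ring

theorem integral_inv_const_sub_sq_eq
    (hV : ∀ z ∈ Ici a, HasDerivWithinAt V (V' z) (Ici a) z)
    (hV' : ∀ z ∈ Ici a, HasDerivWithinAt V' (V'' z) (Ici a) z)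
    (hμ : ∀ z ∈ Ici a, μ - V z ≠ 0) (hV'0 : ∀ z ∈ Ici a, V' z ≠ 0)
    (hsq : IntegrableOn (fun z => ((μ - V z) ^ 2)⁻¹) (Ioi a))
    (hquot : IntegrableOn (fun z => (V'' z : ℂ) / (V' z ^ 2 * (μ - V z))) (Ioi a))
    (hlim : Tendsto (fun z => (μ - V z)⁻¹ * (V' z : ℂ)⁻¹) atTop (𝓝 0)) :
    ∫ z in Ioi a, ((μ - V z) ^ 2)⁻¹ =
      -((μ - V a)⁻¹ * (V' a : ℂ)⁻¹) + ∫ z in Ioi a, (V'' z : ℂ) / (V' z ^ 2 * (μ - V z)) := by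
  have hprim : ∀ z ∈ Ici a, HasDerivWithinAt (fun z => (μ - V z)⁻¹ * (V' z : ℂ)⁻¹)
      (((μ - V z) ^ 2)⁻¹ - V'' z / (V' z ^ 2 * (μ - V z))) (Ici a) z := fun z hz =>
    hasDerivWithinAt_inv_const_sub_mul_inv_deriv (hV z hz) (hV' z hz) (hμ z hz) (hV'0 z hz)
  have hftc := integral_Ioi_of_hasDerivAt_of_tendsto (hprim a self_mem_Ici).continuousWithinAt
    (fun z hz => (hprim z (Ioi_subset_Ici_self hz)).hasDerivAt (Ici_mem_nhds hz))
    (hsq.sub hquot) hlim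
  rw [integral_sub hsq hquot, zero_sub] at hftc
  exact sub_eq_iff_eq_add.1 hftc

theorem continuousOn_inv_const_sub_ofReal {s : Set ℝ} (hV : ContinuousOn V s)
    (hμ : ∀ z ∈ s, μ - V z ≠ 0) : ContinuousOn (fun z => (μ - V z)⁻¹) s :=
  (continuousOn_const.sub (Complex.continuous_ofReal.comp_continuousOn hV)).inv₀ hμ

theorem integrableOn_inv_const_sub_sq (hV : ContinuousOn V (Ici a))
    (hμ : ∀ z ∈ Ici a, μ - V z ≠ 0)
    (hres : (fun z => (μ - V z)⁻¹) =O[atTop] fun z : ℝ => z⁻¹) :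
    IntegrableOn (fun z => ((μ - V z) ^ 2)⁻¹) (Ioi a) := by
  have hcont : ContinuousOn (fun z => ((μ - V z) ^ 2)⁻¹) (Ici a) := by
    simpa only [← inv_pow] using! (continuousOn_inv_const_sub_ofReal hV hμ).pow 2
  have hdecay : (fun z => ((μ - V z) ^ 2)⁻¹) =O[atTop] fun z : ℝ => z ^ (-2 : ℝ) := by
    refine (hres.pow 2).congr' (by simp only [inv_pow, EventuallyEq.rfl]) ?_
    filter_upwards [eventually_ge_atTop 0] with z hz
    rw [Real.rpow_neg hz, Real.rpow_ofNat, inv_pow]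
  exact ((hcont.locallyIntegrableOn measurableSet_Ici).integrableOn_of_isBigO_atTop hdecay
    (integrableAtFilter_rpow_atTop_iff.2 (by norm_num))).mono_set Ioi_subset_Ici_self

theorem integrableOn_div_sq_mul_const_sub (hV : ContinuousOn V (Ici a))
    (hV' : ContinuousOn V' (Ici a)) (hV'' : LocallyIntegrableOn V'' (Ici a))
    (hμ : ∀ z ∈ Ici a, μ - V z ≠ 0) (hV'0 : ∀ z ∈ Ici a, V' z ≠ 0)
    (hres : (fun z => (μ - V z)⁻¹) =O[atTop] fun z : ℝ => z⁻¹)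
    (hinv : (fun z => (V' z)⁻¹) =O[atTop] fun _ => (1 : ℝ))
    (hint : IntegrableAtFilter (fun z => V'' z / z) atTop) :
    IntegrableOn (fun z => (V'' z : ℂ) / (V' z ^ 2 * (μ - V z))) (Ioi a) := by
  let w : ℝ → ℂ := fun z => ((V' z)⁻¹ : ℝ) ^ 2 * (μ - V z)⁻¹
  have hfactor : (fun z => (V'' z : ℂ) / (V' z ^ 2 * (μ - V z))) = fun z => V'' z • w z := by
    ext z
    simp only [w, Complex.real_smul, Complex.ofReal_inv, inv_pow, div_eq_mul_inv, mul_inv]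
  have hw_cont : ContinuousOn w (Ici a) :=
    ((Complex.continuous_ofReal.comp_continuousOn (hV'.inv₀ hV'0)).pow 2).mul
      (continuousOn_inv_const_sub_ofReal hV hμ)
  have hw : w =O[atTop] fun z : ℝ => z⁻¹ := by
    have hinv' : (fun z => (((V' z)⁻¹ : ℝ) : ℂ)) =O[atTop] fun _ => (1 : ℝ) :=
      (isBigO_of_le _ fun z => (Complex.norm_real _).le).trans hinv
    simpa only [one_pow, one_mul] using (hinv'.pow 2).mul hres
  have hloc : LocallyIntegrableOn (fun z => V'' z • w z) (Ici a) :=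
    hV''.smul_continuousOn isClosed_Ici.isLocallyClosed hw_cont
  have hdecay : (fun z => V'' z • w z) =O[atTop] fun z => V'' z / z := by
    simpa only [smul_eq_mul, div_eq_mul_inv] using (isBigO_refl V'' atTop).smul hw
  rw [hfactor]
  exact (hloc.integrableOn_of_isBigO_atTop hdecay hint).mono_set Ioi_subset_Ici_self

theorem tendsto_inv_const_sub_mul_inv_zero
    (hres : (fun z => (μ - V z)⁻¹) =O[atTop] fun z : ℝ => z⁻¹)
    (hinv : (fun z => (V' z)⁻¹) =O[atTop] fun _ => (1 : ℝ)) :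
    Tendsto (fun z => (μ - V z)⁻¹ * (V' z : ℂ)⁻¹) atTop (𝓝 0) := by
  have hinv' : (fun z => (V' z : ℂ)⁻¹) =O[atTop] fun _ => (1 : ℝ) :=
    (isBigO_of_le _ fun z => by simp).trans hinv
  exact (hres.mul hinv').trans_tendsto (by simpa using tendsto_inv_atTop_zero)

theorem integral_inv_const_sub_sq_eq_integral_div_const_sub {g : ℝ → ℝ} {c : ℝ}
    (hV : ∀ z ∈ Ici a, HasDerivWithinAt V (V' z) (Ici a) z)
    (hV' : ∀ z ∈ Ici a, HasDerivWithinAt V' (V'' z) (Ici a) z)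
    (hV'' : LocallyIntegrableOn V'' (Ici a)) (hpos : ∀ z ∈ Ici a, 0 < V' z)
    (hc : 0 < c) (hslope : ∀ᶠ z in atTop, c ≤ V' z)
    (hint : IntegrableAtFilter (fun z => V'' z / z) atTop)
    (hg : ∀ z ∈ Ioi a, g (V z) = V'' z / V' z ^ 3) (hμ : ∀ z ∈ Ici a, μ - V z ≠ 0) :
    IntegrableOn (fun u : ℝ => (g u : ℂ) / (μ - u)) (Ioi (V a)) ∧
      ∫ z in Ioi a, ((μ - V z) ^ 2)⁻¹ =
        -((μ - V a)⁻¹ * (V' a : ℂ)⁻¹) + ∫ u in Ioi (V a), (g u : ℂ) / (μ - u) := by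
  have hlin := eventually_mul_le_of_eventually_le_deriv hV hslope (half_lt_self hc)
  have htop := tendsto_atTop_of_eventually_mul_le (half_pos hc) hlin
  have hmono := strictMonoOn_of_forall_hasDerivWithinAt_pos (convex_Ici _) hV hpos
  have hcont := HasDerivWithinAt.continuousOn hV
  have hV'0 : ∀ z ∈ Ici a, V' z ≠ 0 := fun z hz => (hpos z hz).ne'
  have hres : (fun z => (μ - V z)⁻¹) =O[atTop] fun z : ℝ => z⁻¹ :=
    isBigO_inv_const_sub ((id_isBigO_of_eventually_mul_le (half_pos hc) hlin).trans
      (isBigO_of_le _ fun z => (Complex.norm_real _).ge)) tendsto_id μ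
  have hinv := inv_isBigO_one_of_eventually_le hc hslope
  have hquot := integrableOn_div_sq_mul_const_sub hcont (HasDerivWithinAt.continuousOn hV') hV''
    hμ hV'0 hres hinv hint
  have hsubst : EqOn (fun z => (V'' z : ℂ) / (V' z ^ 2 * (μ - V z)))
      (fun z => V' z • ((g (V z) : ℂ) / (μ - V z))) (Ioi a) := fun z hz => by
    have hV'z : (V' z : ℂ) ≠ 0 := Complex.ofReal_ne_zero.2 (hV'0 z (Ioi_subset_Ici_self hz))
    have hμz := hμ z (Ioi_subset_Ici_self hz)
    simp only [hg z hz, Complex.real_smul, Complex.ofReal_div, Complex.ofReal_pow]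
    field_simp
  refine ⟨?_, ?_⟩
  · rw [integrableOn_Ioi_iff_integrableOn_deriv_smul_comp hV hmono htop]
    exact hquot.congr_fun hsubst measurableSet_Ioi
  · rw [integral_Ioi_eq_integral_deriv_smul_comp hV hmono htop,
      ← setIntegral_congr_fun measurableSet_Ioi hsubst]
    exact integral_inv_const_sub_sq_eq hV hV' hμ hV'0
      (integrableOn_inv_const_sub_sq hcont hμ hres) hquot
      (tendsto_inv_const_sub_mul_inv_zero hres hinv)

end Resolvent

theorem sub_ofReal_ne_zero_of_im_ne_zero_or_re_neg {μ : ℂ} (hμ : μ.im ≠ 0 ∨ μ.re < 0) {x : ℝ}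
    (hx : 0 ≤ x) : μ - x ≠ 0 := by
  intro h
  obtain rfl : μ = x := sub_eq_zero.1 h
  simp [hx.not_gt] at hμ

theorem PhiInf_eq_g_integral_general {V V' V'' g : ℝ → ℝ} {c : ℝ}
    (hV : ∀ z ∈ Ici 0, HasDerivWithinAt V (V' z) (Ici 0) z)
    (hV' : ∀ z ∈ Ici 0, HasDerivWithinAt V' (V'' z) (Ici 0) z)
    (hV'' : LocallyIntegrableOn V'' (Ici 0)) (hV0 : V 0 = 0) (hpos : ∀ z ∈ Ici 0, 0 < V' z)
    (hc : 0 < c) (hslope : ∀ᶠ z in atTop, c ≤ V' z)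
    (hint : IntegrableAtFilter (fun z => V'' z / z) atTop)
    (hg : ∀ z ∈ Ioi 0, g (V z) = V'' z / V' z ^ 3) {μ : ℂ} (hμ : μ.im ≠ 0 ∨ μ.re < 0) :
    IntegrableOn (fun u : ℝ => (g u : ℂ) / (μ - u)) (Ioi 0) ∧
      PhiInf V μ = -(1 / (V' 0 : ℂ)) + μ * ∫ u in Ioi (0 : ℝ), (g u : ℂ) / (μ - u) := by
  have hmono := strictMonoOn_of_forall_hasDerivWithinAt_pos (convex_Ici _) hV hpos
  have hnonneg : ∀ z ∈ Ici 0, 0 ≤ V z := fun z hz =>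
    hV0.symm.trans_le (hmono.monotoneOn self_mem_Ici hz hz)
  have hμ0 : μ ≠ 0 := by simpa using sub_ofReal_ne_zero_of_im_ne_zero_or_re_neg hμ le_rfl
  have hμV : ∀ z ∈ Ici 0, μ - V z ≠ 0 := fun z hz =>
    sub_ofReal_ne_zero_of_im_ne_zero_or_re_neg hμ (hnonneg z hz)
  obtain ⟨hconv, heq⟩ := integral_inv_const_sub_sq_eq_integral_div_const_sub hV hV' hV'' hpos hc
    hslope hint hg hμV
  rw [hV0, Complex.ofReal_zero, sub_zero] at heq
  refine ⟨hV0 ▸ hconv, ?_⟩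
  rw [PhiInf, heq, mul_add, mul_neg, mul_inv_cancel_left₀ hμ0, one_div]

end

/-- `Φ_∞(μ) = -1/V_s'(0) + μ ∫₀^∞ g(u)/(μ-u) du`, absolutely convergent. -/
theorem PhiInf_eq_g_integral
    (Vs : ℝ → ℝ) (As : ℝ)
    (hVs_smooth : ContDiff ℝ (⊤ : ℕ∞) Vs)
    (hVs0 : Vs 0 = 0)
    (hVs'pos : ∀ z : ℝ, 0 ≤ z → 0 < deriv Vs z)
    (hdecay : ∀ p : ℕ, Tendsto (fun z : ℝ => z ^ p * (Vs z - z - As)) atTop (nhds 0))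
    (hderiv_decay : ∀ n : ℕ, 1 ≤ n → ∀ p : ℕ,
      Tendsto (fun z : ℝ => z ^ p * iteratedDeriv n (fun w => Vs w - w) z) atTop (nhds 0))
    (g : ℝ → ℝ)
    (hg : ∀ z : ℝ, 0 ≤ z → g (Vs z) = deriv (deriv Vs) z / (deriv Vs z) ^ 3)
    :
    ∀ μ : ℂ, (μ.im ≠ 0 ∨ μ.re < 0) →
      MeasureTheory.IntegrableOn (fun u : ℝ => (g u : ℂ) / (μ - u)) (Set.Ioi 0) ∧
      PhiInf Vs μ
        = -(1 / ((deriv Vs 0 : ℝ) : ℂ)) + μ * ∫ u in Set.Ioi (0 : ℝ), (g u : ℂ) / (μ - u) := by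
  intro μ hμ
  have hsmooth' : ContDiff ℝ (⊤ : ℕ∞) (deriv Vs) := by simpa using hVs_smooth.iterate_deriv 1
  have hsmooth'' : ContDiff ℝ (⊤ : ℕ∞) (deriv (deriv Vs)) := by
    simpa using hVs_smooth.iterate_deriv 2
  have hdiff : Differentiable ℝ Vs := hVs_smooth.differentiable (by simp)
  have hdiff' : Differentiable ℝ (deriv Vs) := hsmooth'.differentiable (by simp)
  have hslope : Tendsto (fun z => deriv Vs z - 1) atTop (nhds 0) := by
    simpa [iteratedDeriv_one, deriv_sub_id hdiff] using hderiv_decay 1 le_rfl 0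
  have hcurv : Tendsto (fun z => z * deriv (deriv Vs) z) atTop (nhds 0) := by
    simpa [iteratedDeriv_two_sub_id hdiff] using hderiv_decay 2 one_le_two 1
  exact PhiInf_eq_g_integral_general (fun z _ => (hdiff z).hasDerivAt.hasDerivWithinAt)
    (fun z _ => (hdiff' z).hasDerivAt.hasDerivWithinAt)
    (hsmooth''.continuous.locallyIntegrable.locallyIntegrableOn _) hVs0 hVs'pos one_half_pos
    ((hslope.eventually_const_le (neg_lt_zero.2 one_half_pos)).mono fun z hz => by linarith)
    (integrableAtFilter_div_id_of_tendsto_id_mul hsmooth''.continuous hcurv)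
    (fun z hz => hg z hz.le) hμ
end

section
/- Fix μ ∈ ℂ ∖ [0,∞) and define φ_{μ,∞}(z) := (μ − V_s(z)) ∫_z^∞ (μ − V_s(y))^{−2} dy for z ≥ 0. Then φ_{μ,∞} is continuously differentiable on [0,∞) and satisfies: (i) (μ − V_s(z)) φ_{μ,∞}'(z) + V_s'(z) φ_{μ,∞}(z) = −1 for every z ≥ 0; (ii) φ_{μ,∞}'(z) → 0 as z → ∞; (iii) φ_{μ,∞}(z) → −1 as z → ∞; and (iv) φ_{μ,∞}(0) = Φ_∞(μ). -/
open MeasureTheory Filter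

/-- The explicit solution `φ_{μ,∞}(z) = (μ - V_s(z)) ∫_z^∞ (μ - V_s(y))⁻² dy`. -/
noncomputable def phiSol (Vs : ℝ → ℝ) (μ : ℂ) (z : ℝ) : ℂ :=
  (μ - (Vs z : ℂ)) * ∫ y in Set.Ioi z, ((μ - (Vs y : ℂ)) ^ 2)⁻¹

/-!
With `w = μ - V_s`, the function `φ_{μ,∞} = w ∫_z^∞ w⁻²` is the second solution which reduction of
order attaches to `w`, so that (i) says that its Wronskian with `w` is `-1`. Since `w(z) ~ -z`, the
tail `∫_z^∞ w⁻²` is asymptotic to `∫_z^∞ y⁻² dy = 1/z`; hence `φ_{μ,∞} → -1`, and both terms of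
`φ_{μ,∞}' = w' ∫_z^∞ w⁻² - w⁻¹` tend to `0`.
-/

open Asymptotics Set Topology

section TailIntegral

variable {E F : Type*} [NormedAddCommGroup E] [NormedAddCommGroup F]

theorem eventually_integrableOn_Ioi {α : Type*} [Preorder α] [MeasurableSpace α] {ν : Measure α}
    {f : α → E} (hf : IntegrableAtFilter f atTop ν) : ∀ᶠ z in atTop, IntegrableOn f (Ioi z) ν := by
  obtain ⟨s, hs, hfs⟩ := hf
  filter_upwards [eventually_forall_ge_atTop.2 hs] with z hz
  exact hfs.mono_set fun y hy => hz y (le_of_lt hy)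

variable [NormedSpace ℝ E]

theorem isLittleO_integral_Ioi {α : Type*} [LinearOrder α] [TopologicalSpace α]
    [OrderClosedTopology α] [MeasurableSpace α] [OpensMeasurableSpace α] {ν : Measure α}
    {f : α → E} {g : α → F} (hfg : f =o[atTop] g) (hg : IntegrableAtFilter g atTop ν) :
    (fun z => ∫ y in Ioi z, f y ∂ν) =o[atTop] fun z => ∫ y in Ioi z, ‖g y‖ ∂ν := by
  refine isLittleO_iff.2 fun ε hε => ?_
  filter_upwards [eventually_forall_ge_atTop.2 (hfg.def hε), eventually_integrableOn_Ioi hg]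
    with z hz hgz
  calc ‖∫ y in Ioi z, f y ∂ν‖ ≤ ∫ y in Ioi z, ε * ‖g y‖ ∂ν :=
        norm_integral_le_of_norm_le (hgz.norm.const_mul ε)
          (ae_restrict_of_forall_mem measurableSet_Ioi fun y hy => hz y (le_of_lt hy))
    _ = ε * ∫ y in Ioi z, ‖g y‖ ∂ν := integral_const_mul ε _
    _ ≤ ε * ‖∫ y in Ioi z, ‖g y‖ ∂ν‖ := by gcongr; exact Real.le_norm_self _

theorem integral_Ioi_rpow_neg {s z : ℝ} (hs : 1 < s) (hz : 0 < z) :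
    ∫ y in Ioi z, y ^ (-s) = (s - 1)⁻¹ * z ^ (1 - s) := by
  rw [integral_Ioi_rpow_of_lt (by linarith) hz, neg_add_eq_sub, ← neg_sub s 1, div_neg, neg_div,
    neg_neg, div_eq_inv_mul]

theorem integrableAtFilter_rpow_neg_atTop {s : ℝ} (hs : 1 < s) :
    IntegrableAtFilter (fun y : ℝ => y ^ (-s)) atTop :=
  integrableAtFilter_rpow_atTop_iff.2 (neg_lt_neg hs)

theorem isLittleO_integral_Ioi_rpow {f : ℝ → E} {s : ℝ} (hs : 1 < s)
    (hf : f =o[atTop] fun y => y ^ (-s)) :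
    (fun z => ∫ y in Ioi z, f y) =o[atTop] fun z => z ^ (1 - s) := by
  have htail : (fun z => ∫ y in Ioi z, ‖y ^ (-s)‖) =ᶠ[atTop]
      fun z => (s - 1)⁻¹ * z ^ (1 - s) := by
    filter_upwards [eventually_gt_atTop 0] with z hz
    rw [← integral_Ioi_rpow_neg hs hz]
    exact setIntegral_congr_fun measurableSet_Ioi fun y hy =>
      Real.norm_of_nonneg (Real.rpow_nonneg (hz.trans hy).le _)
  exact ((isLittleO_integral_Ioi hf (integrableAtFilter_rpow_neg_atTop hs)).congr' .rfl
    htail).of_const_mul_right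

theorem rpow_neg_smul_rpow_smul {y : ℝ} (hy : 0 < y) (s : ℝ) (v : E) :
    y ^ (-s) • y ^ s • v = v := by
  rw [smul_smul, ← Real.rpow_add hy, neg_add_cancel, Real.rpow_zero, one_smul]

theorem integrableAtFilter_of_tendsto_rpow_smul {f : ℝ → E} {L : E} {s : ℝ} (hs : 1 < s)
    (hf : StronglyMeasurableAtFilter f atTop)
    (hfL : Tendsto (fun y => y ^ s • f y) atTop (𝓝 L)) : IntegrableAtFilter f atTop := by
  have hO : (fun y => y ^ (-s) • y ^ s • f y) =O[atTop] fun y => y ^ (-s) • (1 : ℝ) :=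
    (isBigO_refl _ _).smul (hfL.isBigO_one ℝ)
  refine IsBigO.integrableAtFilter (hO.congr' ?_ (.of_eq (by simp))) hf
    (integrableAtFilter_rpow_neg_atTop hs)
  filter_upwards [eventually_gt_atTop 0] with y hy using rpow_neg_smul_rpow_smul hy s (f y)

theorem isLittleO_sub_rpow_smul {f : ℝ → E} {L : E} {s : ℝ}
    (hfL : Tendsto (fun y => y ^ s • f y) atTop (𝓝 L)) :
    (fun y => f y - y ^ (-s) • L) =o[atTop] fun y => y ^ (-s) := by
  have h : (fun y => y ^ (-s) • (y ^ s • f y - L)) =o[atTop] fun y => y ^ (-s) • (1 : ℝ) :=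
    (isBigO_refl _ _).smul_isLittleO ((isLittleO_one_iff ℝ).2 (tendsto_sub_nhds_zero_iff.2 hfL))
  refine h.congr' ?_ (.of_eq (by simp))
  filter_upwards [eventually_gt_atTop 0] with y hy
  rw [smul_sub, rpow_neg_smul_rpow_smul hy]

theorem tendsto_rpow_smul_integral_Ioi [CompleteSpace E] {f : ℝ → E} {L : E} {s : ℝ} (hs : 1 < s)
    (hf : StronglyMeasurableAtFilter f atTop)
    (hfL : Tendsto (fun y => y ^ s • f y) atTop (𝓝 L)) :
    Tendsto (fun z => z ^ (s - 1) • ∫ y in Ioi z, f y) atTop (𝓝 ((s - 1)⁻¹ • L)) := by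
  have hcancel : ∀ z : ℝ, 0 < z → z ^ (s - 1) * z ^ (1 - s) = 1 := fun z hz => by
    rw [← Real.rpow_add hz, sub_add_sub_cancel, sub_self, Real.rpow_zero]
  have hrem : Tendsto (fun z => z ^ (s - 1) • ∫ y in Ioi z, f y - y ^ (-s) • L) atTop (𝓝 0) := by
    refine (isLittleO_one_iff ℝ).1 <| ((isBigO_refl (fun z : ℝ => z ^ (s - 1)) atTop).smul_isLittleO
      (isLittleO_integral_Ioi_rpow hs (isLittleO_sub_rpow_smul hfL))).congr' .rfl ?_
    filter_upwards [eventually_gt_atTop 0] with z hz using hcancel z hz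
  rw [← zero_add ((s - 1)⁻¹ • L)]
  refine (hrem.add_const _).congr' ?_
  filter_upwards [eventually_gt_atTop 0,
    eventually_integrableOn_Ioi (integrableAtFilter_of_tendsto_rpow_smul hs hf hfL),
    eventually_integrableOn_Ioi (integrableAtFilter_rpow_neg_atTop hs)] with z hz hfz hpz
  rw [integral_sub hfz (hpz.smul_const L), integral_smul_const, integral_Ioi_rpow_neg hs hz,
    smul_sub, smul_smul, mul_left_comm, hcancel z hz, mul_one, sub_add_cancel]

theorem hasDerivWithinAt_integral_Ioi [CompleteSpace E] {f : ℝ → E} {a z : ℝ}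
    (hf : ContinuousOn f (Ici a)) (hfi : IntegrableAtFilter f atTop) (hz : a ≤ z) :
    HasDerivWithinAt (fun x => ∫ y in Ioi x, f y) (-f z) (Ici a) z := by
  have hfa : IntegrableOn f (Ici a) := integrableOn_Ici_iff_integrableAtFilter_atTop.2
    ⟨hfi, hf.locallyIntegrableOn measurableSet_Ici⟩
  have hsplit : ∀ x ∈ Ici a, ∫ y in Ioi x, f y = (∫ y in Ioi a, f y) - ∫ y in a..x, f y :=
    fun x hx => by
      rw [← intervalIntegral.integral_Ioi_sub_Ioi (hfa.mono_set Ioi_subset_Ici_self) hx,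
        sub_sub_cancel]
  have hFTC : HasDerivWithinAt (fun x => ∫ y in a..x, f y) (f z) (Icc a (z + 1)) z := by
    have : Fact (z ∈ Icc a (z + 1)) := ⟨hz, by linarith⟩
    have hfz : ContinuousOn f (Icc a (z + 1)) := hf.mono Icc_subset_Ici_self
    exact intervalIntegral.integral_hasDerivWithinAt_right
      (hf.mono Icc_subset_Ici_self |>.intervalIntegrable_of_Icc hz)
      (hfz.stronglyMeasurableAtFilter_nhdsWithin measurableSet_Icc z) (hfz z this.out)
  have hnhds : Icc a (z + 1) ∈ 𝓝[Ici a] z :=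
    inter_mem_nhdsWithin _ (Iic_mem_nhds (lt_add_one z))
  exact ((hFTC.mono_of_mem_nhdsWithin hnhds).const_sub _).congr hsplit (hsplit z hz)

end TailIntegral

section SecondSolution

variable {𝕜 : Type*} [RCLike 𝕜] {w w' : ℝ → 𝕜} {a z : ℝ} {c : 𝕜}

/-- Reduction of order: if `w` solves a linear equation `u'' = q u` without zeros on a neighbourhood
of `∞`, then `w ∫_z^∞ w⁻²` is a second solution, normalised so that its Wronskian with `w` is `-1`.
The case `w = μ - V_s` is `φ_{μ,∞}`. -/
noncomputable def secondSolution (w : ℝ → 𝕜) (z : ℝ) : 𝕜 :=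
  w z * ∫ y in Ioi z, (w y ^ 2)⁻¹

/-- The derivative of `secondSolution w`, where `w'` stands for the derivative of `w`. -/
noncomputable def secondSolutionDeriv (w w' : ℝ → 𝕜) (z : ℝ) : 𝕜 :=
  w' z * (∫ y in Ioi z, (w y ^ 2)⁻¹) - (w z)⁻¹

theorem wronskian_secondSolution (hz : w z ≠ 0) :
    w z * secondSolutionDeriv w w' z - w' z * secondSolution w z = -1 := by
  unfold secondSolutionDeriv secondSolution
  field_simp
  ring

theorem tendsto_rpow_smul_inv_sq (hc : c ≠ 0)
    (hwc : Tendsto (fun y : ℝ => y⁻¹ • w y) atTop (𝓝 c)) :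
    Tendsto (fun y : ℝ => y ^ (2 : ℝ) • (w y ^ 2)⁻¹) atTop (𝓝 (c ^ 2)⁻¹) :=
  ((hwc.pow 2).inv₀ (pow_ne_zero 2 hc)).congr fun y => by
    rw [smul_pow, smul_inv₀, inv_pow, inv_inv, Real.rpow_two]

theorem stronglyMeasurableAtFilter_inv_sq (hw : StronglyMeasurableAtFilter w atTop) :
    StronglyMeasurableAtFilter (fun y => (w y ^ 2)⁻¹) atTop :=
  let ⟨s, hs, hws⟩ := hw
  ⟨s, hs, (hws.aemeasurable.pow_const 2).inv.aestronglyMeasurable⟩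

theorem tendsto_smul_integral_Ioi_inv_sq (hw : StronglyMeasurableAtFilter w atTop) (hc : c ≠ 0)
    (hwc : Tendsto (fun y : ℝ => y⁻¹ • w y) atTop (𝓝 c)) :
    Tendsto (fun z : ℝ => z • ∫ y in Ioi z, (w y ^ 2)⁻¹) atTop (𝓝 (c ^ 2)⁻¹) := by
  have h := tendsto_rpow_smul_integral_Ioi one_lt_two (stronglyMeasurableAtFilter_inv_sq hw)
    (tendsto_rpow_smul_inv_sq hc hwc)
  have h21 : (2 : ℝ) - 1 = 1 := by norm_num
  simpa only [h21, Real.rpow_one, inv_one, one_smul] using h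

theorem tendsto_secondSolution (hw : StronglyMeasurableAtFilter w atTop) (hc : c ≠ 0)
    (hwc : Tendsto (fun y : ℝ => y⁻¹ • w y) atTop (𝓝 c)) :
    Tendsto (secondSolution w) atTop (𝓝 c⁻¹) := by
  have hlim : c * (c ^ 2)⁻¹ = c⁻¹ := by field_simp
  rw [← hlim]
  refine (hwc.mul (tendsto_smul_integral_Ioi_inv_sq hw hc hwc)).congr' ?_
  filter_upwards [eventually_ne_atTop 0] with z hz
  rw [smul_mul_smul_comm, inv_mul_cancel₀ hz, one_smul, secondSolution]

theorem tendsto_secondSolutionDeriv (hw : StronglyMeasurableAtFilter w atTop) (hc : c ≠ 0)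
    (hwc : Tendsto (fun y : ℝ => y⁻¹ • w y) atTop (𝓝 c))
    (hw' : Tendsto (fun y : ℝ => y⁻¹ • w' y) atTop (𝓝 0)) :
    Tendsto (secondSolutionDeriv w w') atTop (𝓝 0) := by
  have hprod := hw'.mul (tendsto_smul_integral_Ioi_inv_sq hw hc hwc)
  have hinv := tendsto_inv_atTop_zero.smul (hwc.inv₀ hc)
  rw [zero_mul] at hprod
  rw [zero_smul] at hinv
  rw [← sub_zero 0]
  refine (hprod.sub hinv).congr' ?_
  filter_upwards [eventually_ne_atTop 0] with z hz
  rw [smul_mul_smul_comm, inv_mul_cancel₀ hz, one_smul, smul_inv₀, inv_inv, smul_smul,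
    inv_mul_cancel₀ hz, one_smul, secondSolutionDeriv]

theorem continuousOn_inv_sq {s : Set ℝ} (hw : ContinuousOn w s) (hw0 : ∀ y ∈ s, w y ≠ 0) :
    ContinuousOn (fun y => (w y ^ 2)⁻¹) s :=
  (hw.pow 2).inv₀ fun y hy => pow_ne_zero 2 (hw0 y hy)

theorem hasDerivWithinAt_secondSolution (hw : ContinuousOn w (Ici a))
    (hw0 : ∀ y ∈ Ici a, w y ≠ 0) (hwi : IntegrableAtFilter (fun y => (w y ^ 2)⁻¹) atTop)
    (hz : a ≤ z) (hwz : HasDerivWithinAt w (w' z) (Ici a) z) :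
    HasDerivWithinAt (secondSolution w) (secondSolutionDeriv w w' z) (Ici a) z := by
  have hderiv : w' z * (∫ y in Ioi z, (w y ^ 2)⁻¹) + w z * -(w z ^ 2)⁻¹ =
      secondSolutionDeriv w w' z := by
    have := hw0 z hz
    unfold secondSolutionDeriv
    field_simp
    ring
  rw [← hderiv]
  exact hwz.mul (hasDerivWithinAt_integral_Ioi (continuousOn_inv_sq hw hw0) hwi hz)

theorem continuousOn_secondSolutionDeriv (hw : ContinuousOn w (Ici a))
    (hw' : ContinuousOn w' (Ici a)) (hw0 : ∀ y ∈ Ici a, w y ≠ 0)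
    (hwi : IntegrableAtFilter (fun y => (w y ^ 2)⁻¹) atTop) :
    ContinuousOn (secondSolutionDeriv w w') (Ici a) :=
  (hw'.mul fun _ hz => (hasDerivWithinAt_integral_Ioi (continuousOn_inv_sq hw hw0) hwi
    hz).continuousWithinAt).sub (hw.inv₀ hw0)

end SecondSolution

section LinearGrowth

theorem tendsto_inv_smul_const_sub {E : Type*} [NormedAddCommGroup E] [NormedSpace ℝ E]
    {v : ℝ → E} {c : E} (μ : E) (hv : Tendsto (fun z : ℝ => z⁻¹ • v z) atTop (𝓝 c)) :
    Tendsto (fun z : ℝ => z⁻¹ • (μ - v z)) atTop (𝓝 (-c)) := by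
  have hμ : Tendsto (fun z : ℝ => z⁻¹ • μ) atTop (𝓝 ((0 : ℝ) • μ)) :=
    tendsto_inv_atTop_zero.smul_const μ
  simpa only [smul_sub, zero_smul, zero_sub] using hμ.sub hv

variable {V : ℝ → ℝ} {A c : ℝ}

theorem tendsto_inv_smul_ofReal (hV : Tendsto (fun z => V z / z) atTop (𝓝 c)) :
    Tendsto (fun z : ℝ => z⁻¹ • (V z : ℂ)) atTop (𝓝 c) :=
  hV.ofReal.congr fun z => by
    rw [Complex.real_smul, div_eq_inv_mul, Complex.ofReal_mul]

theorem tendsto_div_self_of_tendsto_sub_self (hV : Tendsto (fun z => V z - z) atTop (𝓝 A)) :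
    Tendsto (fun z => V z / z) atTop (𝓝 1) := by
  rw [← zero_add 1]
  refine ((hV.div_atTop tendsto_id).add_const 1).congr' ?_
  filter_upwards [eventually_ne_atTop 0] with z hz
  rw [id, sub_div, div_self hz, sub_add_cancel]

theorem tendsto_deriv_of_tendsto_deriv_sub_self (hV : Differentiable ℝ V)
    (hV' : Tendsto (deriv fun z => V z - z) atTop (𝓝 0)) : Tendsto (deriv V) atTop (𝓝 1) := by
  rw [← zero_add 1]
  refine (hV'.add_const 1).congr fun z => ?_
  rw [deriv_fun_sub (hV z) differentiableAt_fun_id, deriv_id'', sub_add_cancel]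

end LinearGrowth

theorem ofReal_ne_of_nonneg {x : ℝ} {μ : ℂ} (hμ : μ.im ≠ 0 ∨ μ.re < 0) (hx : 0 ≤ x) :
    (x : ℂ) ≠ μ := by
  rintro rfl
  simp [hx.not_gt] at hμ

theorem phiSol_properties_general {V V' : ℝ → ℝ} {c : ℝ} {μ : ℂ}
    (hV : ∀ z, 0 ≤ z → HasDerivWithinAt V (V' z) (Ici 0) z) (hV' : ContinuousOn V' (Ici 0))
    (hV0 : V 0 = 0) (hμ : ∀ z, 0 ≤ z → (V z : ℂ) ≠ μ) (hc : c ≠ 0)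
    (hVc : Tendsto (fun z => V z / z) atTop (𝓝 c))
    (hV'o : Tendsto (fun z => V' z / z) atTop (𝓝 0)) :
    ∃ φd : ℝ → ℂ,
      (∀ z : ℝ, 0 ≤ z → HasDerivWithinAt (phiSol V μ) (φd z) (Ici 0) z) ∧
      ContinuousOn φd (Ici 0) ∧
      (∀ z : ℝ, 0 ≤ z → (μ - V z) * φd z + V' z * phiSol V μ z = -1) ∧
      Tendsto φd atTop (𝓝 0) ∧
      Tendsto (phiSol V μ) atTop (𝓝 (-(c : ℂ)⁻¹)) ∧
      phiSol V μ 0 = PhiInf V μ := by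
  let w : ℝ → ℂ := fun z => μ - V z
  let w' : ℝ → ℂ := fun z => -V' z
  have hphi : phiSol V μ = secondSolution w := rfl
  have hw (z : ℝ) (hz : 0 ≤ z) : HasDerivWithinAt w (w' z) (Ici 0) z :=
    (hV z hz).ofReal_comp.const_sub μ
  have hwcont : ContinuousOn w (Ici 0) := fun z hz => (hw z hz).continuousWithinAt
  have hw'cont : ContinuousOn w' (Ici 0) := (Complex.continuous_ofReal.comp_continuousOn hV').neg
  have hw0 (z : ℝ) (hz : 0 ≤ z) : w z ≠ 0 := sub_ne_zero.2 (hμ z hz).symm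
  have hwm : StronglyMeasurableAtFilter w atTop :=
    ⟨Ici 0, Ici_mem_atTop 0, hwcont.aestronglyMeasurable measurableSet_Ici⟩
  have hc' : (-c : ℂ) ≠ 0 := neg_ne_zero.2 (Complex.ofReal_ne_zero.2 hc)
  have hwc : Tendsto (fun z : ℝ => z⁻¹ • w z) atTop (𝓝 (-c)) :=
    tendsto_inv_smul_const_sub μ (tendsto_inv_smul_ofReal hVc)
  have hw'o : Tendsto (fun z : ℝ => z⁻¹ • w' z) atTop (𝓝 0) := by
    simpa [w'] using (tendsto_inv_smul_ofReal hV'o).neg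
  have hwi : IntegrableAtFilter (fun y => (w y ^ 2)⁻¹) atTop :=
    integrableAtFilter_of_tendsto_rpow_smul one_lt_two (stronglyMeasurableAtFilter_inv_sq hwm)
      (tendsto_rpow_smul_inv_sq hc' hwc)
  refine ⟨secondSolutionDeriv w w', fun z hz => ?_, ?_, fun z hz => ?_, ?_, ?_, ?_⟩
  · exact hasDerivWithinAt_secondSolution hwcont hw0 hwi hz (hw z hz)
  · exact continuousOn_secondSolutionDeriv hwcont hw'cont hw0 hwi
  · simpa [w', hphi] using wronskian_secondSolution (w' := w') (hw0 z hz)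
  · exact tendsto_secondSolutionDeriv hwm hc' hwc hw'o
  · simpa only [hphi, inv_neg] using tendsto_secondSolution hwm hc' hwc
  · simp [phiSol, PhiInf, hV0]

/-- `φ_{μ,∞}` is C¹ on `[0,∞)`, solves `(μ-V_s)φ' + V_s'φ = -1`,
`φ' → 0` and `φ → -1` at infinity, and `φ(0) = Φ_∞(μ)`. -/
theorem phiSol_properties
    (Vs : ℝ → ℝ) (As : ℝ)
    (hVs_smooth : ContDiff ℝ (⊤ : ℕ∞) Vs)
    (hVs0 : Vs 0 = 0)
    (hVs'pos : ∀ z : ℝ, 0 ≤ z → 0 < deriv Vs z)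
    (hdecay : ∀ p : ℕ, Tendsto (fun z : ℝ => z ^ p * (Vs z - z - As)) atTop (nhds 0))
    (hderiv_decay : ∀ n : ℕ, 1 ≤ n → ∀ p : ℕ,
      Tendsto (fun z : ℝ => z ^ p * iteratedDeriv n (fun w => Vs w - w) z) atTop (nhds 0))
    (μ : ℂ) (hμ : μ.im ≠ 0 ∨ μ.re < 0) :
    ∃ φd : ℝ → ℂ,
      (∀ z : ℝ, 0 ≤ z → HasDerivWithinAt (phiSol Vs μ) (φd z) (Set.Ici 0) z) ∧
      ContinuousOn φd (Set.Ici 0) ∧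
      (∀ z : ℝ, 0 ≤ z →
        (μ - (Vs z : ℂ)) * φd z + ((deriv Vs z : ℝ) : ℂ) * phiSol Vs μ z = -1) ∧
      Tendsto φd atTop (nhds 0) ∧
      Tendsto (phiSol Vs μ) atTop (nhds (-1)) ∧
      phiSol Vs μ 0 = PhiInf Vs μ := by
  have hVd : Differentiable ℝ Vs := hVs_smooth.differentiable (by simp)
  have hVc : Tendsto (fun z => Vs z / z) atTop (𝓝 1) :=
    tendsto_div_self_of_tendsto_sub_self (tendsto_sub_nhds_zero_iff.1 (by simpa using hdecay 0))
  have hV' : Tendsto (deriv Vs) atTop (𝓝 1) :=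
    tendsto_deriv_of_tendsto_deriv_sub_self hVd (by simpa using hderiv_decay 1 le_rfl 0)
  have hmono : MonotoneOn Vs (Ici 0) :=
    monotoneOn_of_deriv_nonneg (convex_Ici 0) hVd.continuous.continuousOn hVd.differentiableOn
      fun z hz => (hVs'pos z (interior_subset hz)).le
  have hVμ (z : ℝ) (hz : 0 ≤ z) : (Vs z : ℂ) ≠ μ :=
    ofReal_ne_of_nonneg hμ (hVs0.ge.trans (hmono self_mem_Ici hz hz))
  simpa using phiSol_properties_general (fun z _ => (hVd z).hasDerivAt.hasDerivWithinAt)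
    (hVs_smooth.continuous_deriv (by simp)).continuousOn hVs0 hVμ one_ne_zero hVc
    (hV'.div_atTop tendsto_id)
end
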